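/- Let X₁,…,Xₙ be Banach spaces such that X₁,…,X_{n−1} are Asplund spaces, let G ⊆ X := X₁ × ⋯ × Xₙ be open, and let f : G → ℝ be continuous. Then there exists a meager set A ⊆ G such that for each x ∈ G \ A: if all n partial Fréchet derivatives of f exist at x, then f is Fréchet differentiable at x. -/

import Mathlib

open Metric Set Topology

/-- A Banach space `Z` is Asplund: every continuous convex function on `Z` is Fréchet
differentiable at all points of a comeager set (i.e. the non-differentiability set is meager). -/
def IsAsplund (Z : Type*) [NormedAddCommGroup Z] [NormedSpace ℝ Z] : Prop :=
  ∀ g : Z → ℝ, Continuous g → ConvexOn ℝ Set.univ g →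
    IsMeagre {x : Z | ¬ DifferentiableAt ℝ g x}

/-!
Call a partial derivative of `f` at `x` *strict* if it approximates the increments of `f` in its
coordinate direction uniformly at all base points near `x`. Telescoping `f (x + v) - f x` one
coordinate at a time, and starting with the coordinate `k`, one sees that `f` is differentiable at
`x` as soon as its `k`-th partial derivative exists there and all the others are strict. It remains
to prove that, for a continuous function, a partial derivative along an Asplund space `Y` is strict
wherever it exists, up to a meagre set.

Fix `ε`, `r` and `M`. The pairs `(x, φ)` such that `‖φ‖ ≤ M` and `φ` approximates the increments
of length at most `r` at `x` up to the relative error `ε` form a closed set in the product with the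
weak-star compact ball of the dual. If this set projects onto an open set `W`, it contains a
minimal closed set `F` which still projects onto `W`. As `Y` is Asplund, the functionals occurring
in `F` have a weak-star open slice of small diameter (Šmulian), and by minimality the points of `F`
over some nonempty open subset of `W` all lie in that slice. There a single functional approximates
all increments, so the points where no functional does so form a nowhere dense set.
-/

open Asymptotics Filter Function

section SupportFunction

variable {Y : Type*} [NormedAddCommGroup Y] [NormedSpace ℝ Y] {Q : Set (StrongDual ℝ Y)}

/-- The support function of a set of functionals, meant for nonempty bounded sets: by the
conventions for real suprema, it vanishes where the supremum is infinite or `Q` is empty. -/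
noncomputable def supportFunction (Q : Set (StrongDual ℝ Y)) (y : Y) : ℝ :=
  ⨆ φ : Q, φ.1 y

theorem le_supportFunction (hQ : Bornology.IsBounded Q) {φ : StrongDual ℝ Y} (hφ : φ ∈ Q)
    (y : Y) : φ y ≤ supportFunction Q y := by
  obtain ⟨M, hM⟩ := isBounded_iff_forall_norm_le.1 hQ
  refine le_ciSup (f := fun φ : Q => φ.1 y) ⟨M * ‖y‖, ?_⟩ ⟨φ, hφ⟩
  rintro _ ⟨ψ, rfl⟩
  exact (le_abs_self _).trans (ψ.1.le_of_opNorm_le (hM ψ ψ.2) y)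

theorem continuous_supportFunction (hQ : Bornology.IsBounded Q) (hne : Q.Nonempty) :
    Continuous (supportFunction Q) := by
  have : Nonempty Q := hne.to_subtype
  obtain ⟨M, hM⟩ := isBounded_iff_forall_norm_le.1 hQ
  refine (LipschitzWith.of_le_add_mul' M fun x y => ciSup_le fun φ => ?_).continuous
  calc φ.1 x = φ.1 y + φ.1 (x - y) := by simp
    _ ≤ supportFunction Q y + M * dist x y := by
      rw [dist_eq_norm]
      exact add_le_add (le_supportFunction hQ φ.2 y)
        ((le_abs_self _).trans (φ.1.le_of_opNorm_le (hM φ φ.2) _))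

theorem convexOn_supportFunction (hQ : Bornology.IsBounded Q) (hne : Q.Nonempty) :
    ConvexOn ℝ univ (supportFunction Q) := by
  have : Nonempty Q := hne.to_subtype
  refine ⟨convex_univ, fun x _ y _ a b ha hb _ => ciSup_le fun φ => ?_⟩
  rw [map_add, map_smul, map_smul]
  exact add_le_add (mul_le_mul_of_nonneg_left (le_supportFunction hQ φ.2 x) ha)
    (mul_le_mul_of_nonneg_left (le_supportFunction hQ φ.2 y) hb)

theorem exists_slice_of_differentiableAt_supportFunction (hQ : Bornology.IsBounded Q)
    (hne : Q.Nonempty) {y : Y} (hy : DifferentiableAt ℝ (supportFunction Q) y) {ε : ℝ}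
    (hε : 0 < ε) :
    ∃ c, (∃ φ ∈ Q, c < φ y) ∧ ∀ φ ∈ Q, c < φ y → ‖φ - fderiv ℝ (supportFunction Q) y‖ ≤ ε := by
  have : Nonempty Q := hne.to_subtype
  set p := supportFunction Q
  set L := fderiv ℝ p y
  obtain ⟨δ, hδ, hball⟩ := nhds_basis_closedBall.eventually_iff.1
    ((hasFDerivAt_iff_isLittleO_nhds_zero.1 hy.hasFDerivAt).def (half_pos hε))
  refine ⟨p y - ε / 2 * δ, ?_, fun φ hφ hc => ?_⟩
  · obtain ⟨φ, hφ⟩ := exists_lt_of_lt_ciSup (show p y - ε / 2 * δ < ⨆ φ : Q, φ.1 y from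
      sub_lt_self (p y) (by positivity))
    exact ⟨φ, φ.2, hφ⟩
  have hle : ∀ v ∈ closedBall (0 : Y) δ, (φ - L) v ≤ ε * δ := fun v hv => by
    have hp : p (y + v) - p y - L v ≤ ε / 2 * ‖v‖ := (le_abs_self _).trans (hball hv)
    have hφp : φ y + φ v ≤ p (y + v) := map_add φ y v ▸ le_supportFunction hQ hφ (y + v)
    have hvδ : ε / 2 * ‖v‖ ≤ ε / 2 * δ := by gcongr; simpa using hv
    rw [sub_apply]
    linarith
  have habs : ∀ v ∈ closedBall (0 : Y) δ, ‖(φ - L) v‖ ≤ ε * δ := fun v hv =>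
    abs_le'.2 ⟨hle v hv, map_neg (φ - L) v ▸ hle (-v) (by simpa using hv)⟩
  simpa [hδ.ne'] using ContinuousLinearMap.opNorm_bound_of_ball_bound hδ _ (φ - L) habs

theorem IsAsplund.exists_slice_norm_sub_le [BaireSpace Y] (hY : IsAsplund Y)
    (hQ : Bornology.IsBounded Q) (hne : Q.Nonempty) {ε : ℝ} (hε : 0 < ε) :
    ∃ (y : Y) (c : ℝ) (L : StrongDual ℝ Y),
      (∃ φ ∈ Q, c < φ y) ∧ ∀ φ ∈ Q, c < φ y → ‖φ - L‖ ≤ ε := by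
  obtain ⟨y, hy⟩ := (dense_of_mem_residual (hY _ (continuous_supportFunction hQ hne)
    (convexOn_supportFunction hQ hne))).nonempty
  obtain ⟨c, hc⟩ := exists_slice_of_differentiableAt_supportFunction hQ hne (not_not.1 hy) hε
  exact ⟨y, c, _, hc⟩

end SupportFunction

section MinimalCover

variable {E K : Type*} [TopologicalSpace E] [TopologicalSpace K] [CompactSpace K] {W : Set E}

theorem exists_minimal_isClosed_subset_fst_image {Γ : Set (E × K)} (hΓ : IsClosed Γ)
    (hW : W ⊆ Prod.fst '' Γ) :
    ∃ F ⊆ Γ, Minimal (fun F : Set (E × K) => IsClosed F ∧ W ⊆ Prod.fst '' F) F := by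
  refine zorn_superset_nonempty {F : Set (E × K) | IsClosed F ∧ W ⊆ Prod.fst '' F}
    (fun c hc hchain hne => ?_) Γ ⟨hΓ, hW⟩
  refine ⟨⋂₀ c, ⟨isClosed_sInter fun s hs => (hc hs).1, fun x hx => ?_⟩,
    fun s hs => sInter_subset_of_mem hs⟩
  have : Nonempty c := hne.to_subtype
  let fiber : c → Set K := fun s => {k | (x, k) ∈ s.1}
  have hclosed : ∀ s, IsClosed (fiber s) := fun s =>
    (hc s.2).1.preimage (Continuous.prodMk_right x)
  have hdir : Directed (· ⊇ ·) fiber := fun s t =>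
    (hchain.total s.2 t.2).elim (fun h => ⟨s, fun _ => id, fun _ hk => h hk⟩)
      (fun h => ⟨t, fun _ hk => h hk, fun _ => id⟩)
  have hfiber : ∀ s, (fiber s).Nonempty := fun s => by
    obtain ⟨⟨_, k⟩, hk, rfl⟩ := (hc s.2).2 hx
    exact ⟨k, hk⟩
  obtain ⟨k, hk⟩ := IsCompact.nonempty_iInter_of_directed_nonempty_isCompact_isClosed fiber hdir
    hfiber (fun s => (hclosed s).isCompact) hclosed
  exact ⟨(x, k), fun s hs => mem_iInter.1 hk ⟨s, hs⟩, rfl⟩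

theorem exists_eventually_fiber_inter_nonempty_of_minimal (hW : IsOpen W) {F : Set (E × K)}
    (hF : Minimal (fun F : Set (E × K) => IsClosed F ∧ W ⊆ Prod.fst '' F) F) {U : Set (E × K)}
    (hU : IsOpen U) (hFU : (F ∩ U).Nonempty) :
    ∃ x ∈ W, ∀ᶠ y in 𝓝 x, ∃ k, (y, k) ∈ F ∩ U := by
  obtain ⟨q, hqF, hqU⟩ := hFU
  have hclosed : IsClosed (F \ U) := hF.prop.1.sdiff hU
  have hnot : ¬ W ⊆ Prod.fst '' (F \ U) := fun hcov =>
    (hF.le_of_le ⟨hclosed, hcov⟩ sdiff_subset hqF).2 hqU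
  obtain ⟨x, hxW, hx⟩ := not_subset.1 hnot
  refine ⟨x, hxW, ?_⟩
  filter_upwards [hW.mem_nhds hxW,
    (isClosedMap_fst_of_compactSpace _ hclosed).isOpen_compl.mem_nhds hx] with y hyW hy
  obtain ⟨⟨_, k⟩, hk, rfl⟩ := hF.prop.2 hyW
  exact ⟨k, hk, by_contra fun hkU => hy ⟨_, ⟨hk, hkU⟩, rfl⟩⟩

end MinimalCover

/-- The closed ball of radius `M` in the dual of `Y`, with the weak-star topology. -/
abbrev WeakStarBall (Y : Type*) [NormedAddCommGroup Y] [NormedSpace ℝ Y] (M : ℝ) : Type _ :=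
  ↥(WeakDual.toStrongDual ⁻¹' closedBall (0 : StrongDual ℝ Y) M)

instance WeakStarBall.instCompactSpace (Y : Type*) [NormedAddCommGroup Y] [NormedSpace ℝ Y]
    (M : ℝ) : CompactSpace (WeakStarBall Y M) :=
  isCompact_iff_compactSpace.1 (WeakDual.isCompact_closedBall (0 : StrongDual ℝ Y) M)

theorem WeakStarBall.continuous_apply {Y : Type*} [NormedAddCommGroup Y] [NormedSpace ℝ Y]
    {M : ℝ} (h : Y) : Continuous fun φ : WeakStarBall Y M => φ.1 h :=
  (WeakDual.eval_continuous h).comp continuous_subtype_val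

theorem opNorm_sub_le_of_isLittleO_of_eventually_le {𝕜 Y F : Type*} [NontriviallyNormedField 𝕜]
    [SeminormedAddCommGroup Y] [NormedSpace 𝕜 Y] [SeminormedAddCommGroup F] [NormedSpace 𝕜 F]
    {u : Y → F} {φ ψ : Y →L[𝕜] F} (hφ : (fun h => u h - φ h) =o[𝓝 0] fun h => h) {ε : ℝ}
    (hε : 0 ≤ ε) (hψ : ∀ᶠ h in 𝓝 0, ‖u h - ψ h‖ ≤ ε * ‖h‖) : ‖ψ - φ‖ ≤ ε := by
  refine le_of_forall_pos_le_add fun δ hδ =>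
    ContinuousLinearMap.opNorm_le_of_nhds_zero (by positivity) ?_
  filter_upwards [hφ.def hδ, hψ] with h hφh hψh
  calc ‖ψ h - φ h‖ ≤ ‖ψ h - u h‖ + ‖u h - φ h‖ := norm_sub_le_norm_sub_add_norm_sub _ _ _
    _ ≤ ε * ‖h‖ + δ * ‖h‖ := add_le_add (norm_sub_rev (ψ h) _ ▸ hψh) hφh
    _ = (ε + δ) * ‖h‖ := by ring

section ParametrizedIncrements

variable {E Y : Type*} [NormedAddCommGroup Y] [NormedSpace ℝ Y]
  {g : E × Y → ℝ} {D : Set (E × Y)} {ε r M : ℝ}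

/-- The pairs `(x, φ)` for which `φ` approximates `g (x, ·)` on the ball of radius `r`, as far as
it lies in `D`, up to the relative error `ε`. Nothing is asked off the open set `D`, so that
continuity of `g` on `D` makes this set closed. -/
def approxGraph (g : E × Y → ℝ) (D : Set (E × Y)) (ε r M : ℝ) : Set (E × WeakStarBall Y M) :=
  {q | ∀ h : Y, ‖h‖ ≤ r → (q.1, h) ∈ D → |g (q.1, h) - q.2.1 h| ≤ ε * ‖h‖}

theorem exists_mem_fst_image_approxGraph {x : E} {φ : StrongDual ℝ Y}
    (hφ : (fun h => g (x, h) - φ h) =o[𝓝 0] fun h => h) (D : Set (E × Y)) (hε : 0 < ε) :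
    ∃ m : ℕ, x ∈ Prod.fst '' approxGraph g D ε (1 / ((m : ℝ) + 1)) m := by
  obtain ⟨δ, hδ, hball⟩ := Metric.eventually_nhds_iff.1 (hφ.def hε)
  obtain ⟨m, hmδ, hmφ⟩ := ((tendsto_one_div_add_atTop_nhds_zero_nat.eventually_lt_const hδ).and
    (tendsto_natCast_atTop_atTop.eventually_ge_atTop ‖φ‖)).exists
  exact ⟨m, (x, ⟨StrongDual.toWeakDual φ, by simpa using hmφ⟩),
    fun h hh _ => hball (by simpa using hh.trans_lt hmδ), rfl⟩

variable [TopologicalSpace E]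

/-- The parameters `x` for which a single functional approximates all `g (x', ·)` with `x'` close
to `x` on a common ball around `0`, up to the relative error `ε`. As in `approxGraph`, nothing is
asked off `D`. -/
def stableSet (g : E × Y → ℝ) (D : Set (E × Y)) (ε : ℝ) : Set E :=
  {x | ∃ φ : StrongDual ℝ Y, ∀ᶠ p in 𝓝 (x, (0 : Y)), p ∈ D → |g p - φ p.2| ≤ ε * ‖p.2‖}

theorem isClosed_approxGraph (hD : IsOpen D) (hg : ContinuousOn g D) :
    IsClosed (approxGraph g D ε r M) := by
  simp only [approxGraph, ofPred_forall]
  refine isClosed_iInter fun h => isClosed_iInter fun _ => ?_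
  let O : Set (E × WeakStarBall Y M) := {q | (q.1, h) ∈ D}
  have hO : IsOpen O := hD.preimage (by fun_prop)
  have herr : ContinuousOn (fun q : E × WeakStarBall Y M => |g (q.1, h) - q.2.1 h|) O :=
    (ContinuousOn.sub (hg.comp (f := fun q => (q.1, h)) (by fun_prop) fun _ hq => hq)
      ((WeakStarBall.continuous_apply h).comp continuous_snd).continuousOn).abs
  have hopen := herr.isOpen_inter_preimage hO (isOpen_Ioi (a := ε * ‖h‖))
  convert hopen.isClosed_compl using 1
  ext q
  simp [O]

theorem isOpen_stableSet (g : E × Y → ℝ) (D : Set (E × Y)) (ε : ℝ) :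
    IsOpen (stableSet g D ε) := by
  refine isOpen_iff_mem_nhds.2 fun x ⟨φ, hφ⟩ => ?_
  filter_upwards [(Continuous.prodMk_left (0 : Y)).continuousAt.eventually hφ.eventually_nhds]
    with y hy using ⟨φ, hy⟩

theorem stableSet_mono {ε' : ℝ} (h : ε ≤ ε') : stableSet g D ε ⊆ stableSet g D ε' :=
  fun _ ⟨φ, hφ⟩ => ⟨φ, hφ.mono fun _ hp hpD => (hp hpD).trans (by gcongr)⟩

theorem IsAsplund.inter_stableSet_nonempty [BaireSpace Y] (hY : IsAsplund Y) (hD : IsOpen D)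
    (hg : ContinuousOn g D) (hε : 0 < ε) (hr : 0 < r) {W : Set E} (hWo : IsOpen W)
    (hWne : W.Nonempty) (hW : W ⊆ Prod.fst '' approxGraph g D (ε / 2) r M) :
    (W ∩ stableSet g D ε).Nonempty := by
  obtain ⟨F, hFΓ, hF⟩ := exists_minimal_isClosed_subset_fst_image (isClosed_approxGraph hD hg) hW
  let functional : E × WeakStarBall Y M → StrongDual ℝ Y := fun q => WeakDual.toStrongDual q.2.1
  have hbdd : Bornology.IsBounded (functional '' F) :=
    isBounded_closedBall.subset (image_subset_iff.2 fun q _ => q.2.2)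
  have hne : (functional '' F).Nonempty := (image_nonempty.1 (hWne.mono hF.prop.2)).image _
  obtain ⟨y, c, L, ⟨_, ⟨q, hqF, rfl⟩, hq⟩, hL⟩ :=
    hY.exists_slice_norm_sub_le hbdd hne (half_pos hε)
  have hU : IsOpen {q : E × WeakStarBall Y M | c < functional q y} :=
    isOpen_lt continuous_const ((WeakStarBall.continuous_apply y).comp continuous_snd)
  obtain ⟨x, hxW, hx⟩ := exists_eventually_fiber_inter_nonempty_of_minimal hWo hF hU ⟨q, hqF, hq⟩
  refine ⟨x, hxW, L, ?_⟩
  rw [nhds_prod_eq]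
  filter_upwards [hx.prod_mk (closedBall_mem_nhds (0 : Y) hr)]
    with ⟨x', h⟩ ⟨⟨φ, hφF, hφc⟩, hh⟩ hD'
  have hgφ := hFΓ hφF h (by simpa using hh) hD'
  have hφL := (functional (x', φ) - L).le_of_opNorm_le (hL _ ⟨_, hφF, rfl⟩ hφc) h
  calc |g (x', h) - L h| ≤ |g (x', h) - φ.1 h| + |φ.1 h - L h| := abs_sub_le _ _ _
    _ ≤ ε / 2 * ‖h‖ + ε / 2 * ‖h‖ := add_le_add hgφ hφL
    _ = ε * ‖h‖ := by ring

theorem IsAsplund.isNowhereDense_fst_image_approxGraph_sdiff [BaireSpace Y] (hY : IsAsplund Y)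
    (hD : IsOpen D) (hg : ContinuousOn g D) (hε : 0 < ε) (hr : 0 < r) (M : ℝ) :
    IsNowhereDense (Prod.fst '' approxGraph g D (ε / 2) r M \ stableSet g D ε) := by
  have hclosed : IsClosed (Prod.fst '' approxGraph g D (ε / 2) r M \ stableSet g D ε) :=
    (isClosedMap_fst_of_compactSpace _ (isClosed_approxGraph hD hg)).sdiff (isOpen_stableSet g D ε)
  rw [hclosed.isNowhereDense_iff, ← not_nonempty_iff_eq_empty]
  intro hne
  obtain ⟨x, hx, hxs⟩ := hY.inter_stableSet_nonempty hD hg hε hr isOpen_interior hne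
    (interior_subset.trans sdiff_subset)
  exact (interior_subset hx).2 hxs

theorem IsAsplund.isMeagre_setOf_notMem_stableSet [BaireSpace Y] (hY : IsAsplund Y)
    (hD : IsOpen D) (hg : ContinuousOn g D) (hε : 0 < ε) :
    IsMeagre {x | (∃ φ : StrongDual ℝ Y, (fun h => g (x, h) - φ h) =o[𝓝 0] fun h => h) ∧
      x ∉ stableSet g D ε} := by
  refine (isMeagre_iUnion fun m : ℕ => (hY.isNowhereDense_fst_image_approxGraph_sdiff hD hg hε
    (Nat.one_div_pos_of_nat (α := ℝ) (n := m)) m).isMeagre).mono ?_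
  rintro x ⟨⟨φ, hφ⟩, hx⟩
  obtain ⟨m, hm⟩ := exists_mem_fst_image_approxGraph hφ D (half_pos hε)
  exact mem_iUnion.2 ⟨m, hm, hx⟩

theorem isLittleO_snd_of_forall_mem_stableSet (hD : IsOpen D) {x : E} (hx : (x, 0) ∈ D)
    {φ : StrongDual ℝ Y} (hφ : (fun h => g (x, h) - φ h) =o[𝓝 0] fun h => h)
    (hstable : ∀ ε > 0, x ∈ stableSet g D ε) :
    (fun p : E × Y => g p - φ p.2) =o[𝓝 (x, 0)] Prod.snd := by
  refine isLittleO_iff.2 fun ε hε => ?_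
  obtain ⟨ψ, hψD⟩ := hstable (ε / 2) (half_pos hε)
  have hψ : ∀ᶠ p in 𝓝 (x, (0 : Y)), |g p - ψ p.2| ≤ ε / 2 * ‖p.2‖ := by
    filter_upwards [hψD, hD.mem_nhds hx] with p hp hpD using hp hpD
  have hnorm : ‖ψ - φ‖ ≤ ε / 2 := opNorm_sub_le_of_isLittleO_of_eventually_le hφ
    (half_pos hε).le ((Continuous.prodMk_right x).continuousAt.eventually hψ)
  filter_upwards [hψ] with p hp
  calc |g p - φ p.2| ≤ |g p - ψ p.2| + |ψ p.2 - φ p.2| := abs_sub_le _ _ _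
    _ ≤ ε / 2 * ‖p.2‖ + ε / 2 * ‖p.2‖ := add_le_add hp ((ψ - φ).le_of_opNorm_le hnorm p.2)
    _ = ε * ‖p.2‖ := by ring

theorem IsAsplund.isMeagre_setOf_not_isLittleO_snd [BaireSpace Y] (hY : IsAsplund Y)
    (hD : IsOpen D) (hg : ContinuousOn g D) :
    IsMeagre {x | (x, 0) ∈ D ∧ ∃ φ : StrongDual ℝ Y,
      ((fun h => g (x, h) - φ h) =o[𝓝 0] fun h => h) ∧
      ¬ (fun p : E × Y => g p - φ p.2) =o[𝓝 (x, 0)] Prod.snd} := by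
  refine (isMeagre_iUnion fun k : ℕ => hY.isMeagre_setOf_notMem_stableSet hD hg
    (Nat.one_div_pos_of_nat (α := ℝ) (n := k))).mono ?_
  rintro x ⟨hxD, φ, hφ, hnot⟩
  by_contra hx
  simp only [mem_iUnion, mem_ofPred_eq, not_exists, not_and, not_not] at hx
  refine hnot (isLittleO_snd_of_forall_mem_stableSet hD hxD hφ fun ε hε => ?_)
  obtain ⟨k, hk⟩ := exists_nat_one_div_lt hε
  exact stableSet_mono hk.le (hx k ⟨φ, hφ⟩)

end ParametrizedIncrements

section StrictPartial

variable {ι : Type*} [DecidableEq ι] {𝕜 F : Type*} [NontriviallyNormedField 𝕜]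
  {X : ι → Type*} [∀ i, NormedAddCommGroup (X i)] [∀ i, NormedSpace 𝕜 (X i)]
  [NormedAddCommGroup F] [NormedSpace 𝕜 F]

/-- `f'` is the strict partial derivative of `f` at `x` in the `i`-th coordinate: the increments
`f (y + h eᵢ) - f y` are `f' h + o(h)` as `h → 0`, uniformly for `y` near `x`. -/
def HasStrictPartialFDerivAt (f : (∀ j, X j) → F) (i : ι) (f' : X i →L[𝕜] F) (x : ∀ j, X j) :
    Prop :=
  (fun p : (∀ j, X j) × X i => f (update p.1 i (p.1 i + p.2)) - f p.1 - f' p.2)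
    =o[𝓝 (x, 0)] Prod.snd

variable {f : (∀ i, X i) → F} {x : ∀ i, X i}

theorem HasStrictPartialFDerivAt.hasFDerivAt_piecewise_insert_sub [Finite ι] {i : ι}
    {f' : X i →L[𝕜] F} (hf : HasStrictPartialFDerivAt f i f' x) {s : Finset ι} (hi : i ∉ s) :
    HasFDerivAt (fun y => f ((insert i s).piecewise y x) - f (s.piecewise y x))
      (f'.comp (ContinuousLinearMap.proj i)) x := by
  cases nonempty_fintype ι
  have hpiecewise : Continuous fun y : ∀ j, X j => s.piecewise y x := continuous_pi fun j => by
    by_cases hj : j ∈ s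
    · simpa [hj] using continuous_apply j
    · simpa [hj] using continuous_const
  have hlim : Tendsto (fun y : ∀ j, X j => (s.piecewise y x, y i - x i)) (𝓝 x) (𝓝 (x, 0)) :=
    Continuous.tendsto' (by fun_prop) _ _ (by simp [Finset.piecewise_same])
  have hcoord : (fun y : ∀ j, X j => y i - x i) =O[𝓝 x] fun y => y - x :=
    isBigO_of_le _ fun y => norm_le_pi_norm (y - x) i
  refine .of_isLittleO (((hf.comp_tendsto hlim).trans_isBigO hcoord).congr_left fun y => ?_)
  simp [Finset.piecewise_insert, hi, Finset.piecewise_same]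

theorem hasFDerivAt_piecewise_insert [Finite ι] {f' : ∀ i, X i →L[𝕜] F} {k : ι}
    (hk : HasFDerivAt (fun t => f (update x k t)) (f' k) (x k)) {s : Finset ι} (hks : k ∉ s)
    (hs : ∀ i ∈ s, HasStrictPartialFDerivAt f i (f' i) x) :
    HasFDerivAt (fun y => f ((insert k s).piecewise y x))
      (∑ i ∈ insert k s, (f' i).comp (ContinuousLinearMap.proj i)) x := by
  cases nonempty_fintype ι
  induction s using Finset.induction_on with
  | empty =>
    simp_rw [Finset.piecewise_insert, Finset.piecewise_empty]
    simpa [comp_def] using hk.comp (𝕜 := 𝕜) x (hasFDerivAt_apply k x)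
  | insert i s his ih =>
    obtain ⟨hki, hks'⟩ : k ≠ i ∧ k ∉ s := by simpa using hks
    have hi : i ∉ insert k s := by simp [his, hki.symm]
    have hincr := (hs i (Finset.mem_insert_self i s)).hasFDerivAt_piecewise_insert_sub hi
    rw [Finset.insert_comm, Finset.sum_insert hi, add_comm]
    simpa [Pi.add_def] using (ih hks' fun j hj => hs j (Finset.mem_insert_of_mem hj)).add hincr

theorem hasFDerivAt_of_hasStrictPartialFDerivAt [Fintype ι] {f' : ∀ i, X i →L[𝕜] F} (k : ι)
    (hk : HasFDerivAt (fun t => f (update x k t)) (f' k) (x k))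
    (hf' : ∀ i ≠ k, HasStrictPartialFDerivAt f i (f' i) x) :
    HasFDerivAt f (∑ i, (f' i).comp (ContinuousLinearMap.proj i)) x := by
  simpa [Finset.piecewise_insert, Finset.piecewise_erase_univ] using
    hasFDerivAt_piecewise_insert hk (Finset.notMem_erase k Finset.univ)
      fun i hi => hf' i (Finset.ne_of_mem_erase hi)

end StrictPartial

theorem IsAsplund.isMeagre_setOf_not_hasStrictPartialFDerivAt {ι : Type*} [DecidableEq ι]
    {X : ι → Type*} [∀ j, NormedAddCommGroup (X j)] [∀ j, NormedSpace ℝ (X j)] {i : ι}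
    [BaireSpace (X i)] (hi : IsAsplund (X i)) {G : Set (∀ j, X j)} (hG : IsOpen G)
    {f : (∀ j, X j) → ℝ} (hf : ContinuousOn f G) :
    IsMeagre {x ∈ G | DifferentiableAt ℝ (fun t => f (update x i t)) (x i) ∧
      ¬ HasStrictPartialFDerivAt f i (fderiv ℝ (fun t => f (update x i t)) (x i)) x} := by
  let move : (∀ j, X j) × X i → ∀ j, X j := fun p => update p.1 i (p.1 i + p.2)
  have hmove : Continuous move := continuous_fst.update i (by fun_prop)
  let D : Set ((∀ j, X j) × X i) := Prod.fst ⁻¹' G ∩ move ⁻¹' G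
  have hD : IsOpen D := (hG.preimage continuous_fst).inter (hG.preimage hmove)
  have hg : ContinuousOn (fun p => f (move p) - f p.1) D :=
    (hf.comp hmove.continuousOn fun _ hp => hp.2).sub
      (hf.comp continuous_fst.continuousOn fun _ hp => hp.1)
  refine (hi.isMeagre_setOf_not_isLittleO_snd hD hg).mono ?_
  rintro x ⟨hxG, hd, hnot⟩
  refine ⟨⟨hxG, by simpa [move] using hxG⟩, _, ?_, hnot⟩
  simpa [move] using hasFDerivAt_iff_isLittleO_nhds_zero.1 hd.hasFDerivAt

theorem meagre_exceptional_set_partials_asplund_general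
    {ι : Type*} [Finite ι] [DecidableEq ι] {X : ι → Type*}
    [∀ i, NormedAddCommGroup (X i)] [∀ i, NormedSpace ℝ (X i)] (k : ι)
    (hBaire : ∀ i, i ≠ k → BaireSpace (X i)) (hAsp : ∀ i, i ≠ k → IsAsplund (X i))
    {G : Set (∀ i, X i)} (hG : IsOpen G) {f : (∀ i, X i) → ℝ} (hf : ContinuousOn f G) :
    ∃ A : Set (∀ i, X i), A ⊆ G ∧ IsMeagre A ∧
      ∀ x ∈ G \ A, (∀ i, DifferentiableAt ℝ (fun t : X i => f (update x i t)) (x i)) →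
        DifferentiableAt ℝ f x := by
  cases nonempty_fintype ι
  let f' : (∀ i, X i) → ∀ i, StrongDual ℝ (X i) := fun x i =>
    fderiv ℝ (fun t : X i => f (update x i t)) (x i)
  let B : ι → Set (∀ i, X i) := fun i =>
    {x ∈ G | DifferentiableAt ℝ (fun t : X i => f (update x i t)) (x i) ∧
      ¬ HasStrictPartialFDerivAt f i (f' x i) x}
  have hB : ∀ i : {i // i ≠ k}, IsMeagre (B i) := fun ⟨i, hi⟩ =>
    have := hBaire i hi
    (hAsp i hi).isMeagre_setOf_not_hasStrictPartialFDerivAt hG hf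
  refine ⟨⋃ i : {i // i ≠ k}, B i, iUnion_subset fun _ => sep_subset _ _, isMeagre_iUnion hB,
    fun x ⟨hxG, hxB⟩ hd => ?_⟩
  have hstrict : ∀ i ≠ k, HasStrictPartialFDerivAt f i (f' x i) x := fun i hi =>
    by_contra fun hnot => hxB (mem_iUnion.2 ⟨⟨i, hi⟩, hxG, hd i, hnot⟩)
  exact (hasFDerivAt_of_hasStrictPartialFDerivAt k (hd k).hasFDerivAt hstrict).differentiableAt

theorem meagre_exceptional_set_partials_asplund
    {n : ℕ} {X : Fin (n + 1) → Type*}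
    [∀ i, NormedAddCommGroup (X i)] [∀ i, NormedSpace ℝ (X i)] [∀ i, CompleteSpace (X i)]
    (hAsp : ∀ i : Fin (n + 1), i ≠ Fin.last n → IsAsplund (X i))
    (G : Set (∀ i, X i)) (hG : IsOpen G)
    (f : (∀ i, X i) → ℝ) (hf : ContinuousOn f G) :
    ∃ A : Set (∀ i, X i), A ⊆ G ∧ IsMeagre A ∧
      ∀ x ∈ G \ A,
        (∀ i : Fin (n + 1),
          DifferentiableAt ℝ (fun t : X i => f (Function.update x i t)) (x i)) →
        DifferentiableAt ℝ f x :=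
  meagre_exceptional_set_partials_asplund_general (Fin.last n) (fun _ _ => inferInstance) hAsp hG hf
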